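/- arXiv:1710.08513 — 3 statements merged into one kernel-verified Lean document; each statement's English description precedes it below -/
import Mathlib

section
/- For every tensor x ∈ ℝ^{n_1×…×n_d}, the Tucker rank of x — defined as the entrywise-minimal tuple (r_1,…,r_d) such that x admits a Tucker representation x[μ_1,…,μ_d] = Σ_{ν_1=1}^{r_1}⋯Σ_{ν_d=1}^{r_d} c[ν_1,…,ν_d] U_1[μ_1,ν_1]⋯U_d[μ_d,ν_d] with core c ∈ ℝ^{r_1×…×r_d} and basis matrices U_i ∈ ℝ^{n_i×r_i} — exists and equals (rank(M_{{1}}(x)), rank(M_{{2}}(x)), …, rank(M_{{d}}(x))), where M_{{i}}(x) is the i-th mode matricization of x. -/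
/-!
Mode matricization turns multilinear multiplication into matrix multiplication:
`M_{i}((⨂ₖ Aₖ) x) = Aᵢ * M_{i}(x) * (⨂_{k ≠ i} Aₖ)ᵀ`.
Hence `M_{i}(x)` factors through `K ^ rᵢ` whenever `x = (⨂ₖ Uₖ) c` is a Tucker representation, so
that `rank M_{i}(x) ≤ rᵢ`. Conversely, write a projection onto the column space of `M_{i}(x)` as
`Uᵢ Wᵢ` with inner dimension `rank M_{i}(x)`. Applying `Uᵢ Wᵢ` in mode `i` alone fixes `x`, by the
same identity; hence so does `⨂ᵢ Uᵢ Wᵢ = (⨂ᵢ Uᵢ)(⨂ᵢ Wᵢ)`, and `c = (⨂ᵢ Wᵢ) x` is a core.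
-/

/-- The `i`-th mode matricization `M_{{i}}(x)` of a tensor `x ∈ ℝ^{n_0 × … × n_{d-1}}`:
rows are indexed by the `i`-th mode and columns by all remaining modes. -/
def modeMat (d : ℕ) (n : Fin d → ℕ) (x : (∀ k : Fin d, Fin (n k)) → ℝ) (i : Fin d) :
    Matrix (Fin (n i)) (∀ k : {k : Fin d // k ≠ i}, Fin (n k.val)) ℝ := fun μ j =>
  x (fun k => if h : k = i then Fin.cast (congrArg n h).symm μ else j ⟨k, h⟩)

/-- A Tucker representation of `x` with representation rank tuple `ρ`: a core tensor
`c ∈ ℝ^{ρ_1 × … × ρ_d}` and basis matrices `U_i ∈ ℝ^{n_i × ρ_i}` with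
`x[μ] = Σ_ν c[ν] · Π_i U_i[μ_i, ν_i]`. -/
def IsTuckerRepr (d : ℕ) (n : Fin d → ℕ) (x : (∀ k : Fin d, Fin (n k)) → ℝ)
    (ρ : Fin d → ℕ) : Prop :=
  ∃ (c : (∀ i : Fin d, Fin (ρ i)) → ℝ) (U : ∀ i : Fin d, Fin (n i) → Fin (ρ i) → ℝ),
    ∀ μ, x μ = ∑ ν : ∀ i : Fin d, Fin (ρ i), c ν * ∏ i : Fin d, U i (μ i) (ν i)

open scoped Matrix

section Kronecker

variable {ι K : Type*} [Fintype ι] [CommSemiring K] {l m n : ι → Type*}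

/-- The Kronecker product `⨂ᵢ Aᵢ` of a finite family of matrices, with rows and columns indexed by
multi-indices. A tensor being a function of a multi-index, the multilinear multiplication of `x` by
`A` in all modes is `piKronecker A *ᵥ x`. -/
def piKronecker (A : ∀ i, Matrix (m i) (n i) K) : Matrix (∀ i, m i) (∀ i, n i) K :=
  Matrix.of fun μ ν => ∏ i, A i (μ i) (ν i)

theorem piKronecker_apply (A : ∀ i, Matrix (m i) (n i) K) (μ : ∀ i, m i) (ν : ∀ i, n i) :
    piKronecker A μ ν = ∏ i, A i (μ i) (ν i) :=
  rfl

theorem piKronecker_one [∀ i, DecidableEq (n i)] :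
    piKronecker (1 : ∀ i, Matrix (n i) (n i) K) = 1 := by
  ext μ ν
  simp only [piKronecker_apply, Pi.one_apply, Matrix.one_apply, Finset.prod_ite_zero,
    Finset.prod_const_one, Finset.mem_univ, true_imp_iff, funext_iff]

variable [DecidableEq ι]

theorem piKronecker_mul [∀ i, Fintype (m i)] (A : ∀ i, Matrix (l i) (m i) K)
    (B : ∀ i, Matrix (m i) (n i) K) :
    piKronecker (fun i => A i * B i) = piKronecker A * piKronecker B := by
  ext μ κ
  simp only [piKronecker_apply, Matrix.mul_apply, ← Finset.prod_mul_distrib, Fintype.prod_sum]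

theorem piKronecker_piSplitAt_symm (A : ∀ i, Matrix (m i) (n i) K) (i : ι)
    (a : m i) (b : n i) (p : ∀ k : {k // k ≠ i}, m k) (q : ∀ k : {k // k ≠ i}, n k) :
    piKronecker A ((Equiv.piSplitAt i m).symm (a, p)) ((Equiv.piSplitAt i n).symm (b, q)) =
      A i a b * piKronecker (fun k : {k // k ≠ i} => A k) p q := by
  have apply_ne (k : {k // k ≠ i}) : ¬ (k : ι) = i := k.2
  simp only [piKronecker_apply, Fintype.prod_eq_mul_prod_subtype_ne _ i,
    Equiv.piSplitAt_symm_apply, apply_ne, dite_true, dite_false]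

end Kronecker

section Matricization

variable {ι K : Type*} [DecidableEq ι] {m n : ι → Type*}

/-- The `i`-th mode matricization of a tensor with entries in `K` and arbitrary index types: rows
are indexed by the `i`-th mode, columns by all remaining modes. -/
def matricization (i : ι) (x : (∀ k, n k) → K) : Matrix (n i) (∀ k : {k // k ≠ i}, n k) K :=
  Matrix.of fun a p => x ((Equiv.piSplitAt i n).symm (a, p))

theorem matricization_apply (i : ι) (x : (∀ k, n k) → K) (a : n i)
    (p : ∀ k : {k // k ≠ i}, n k) :
    matricization i x a p = x ((Equiv.piSplitAt i n).symm (a, p)) :=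
  rfl

theorem matricization_injective (i : ι) :
    Function.Injective (matricization i : ((∀ k, n k) → K) → _) := by
  intro x y h
  refine (Equiv.piSplitAt i n).symm.surjective.injective_comp_right ?_
  funext ⟨a, p⟩
  exact congr_fun₂ h a p

variable [Fintype ι] [CommSemiring K] [∀ i, Fintype (n i)]

theorem matricization_piKronecker_mulVec (A : ∀ i, Matrix (m i) (n i) K) (x : (∀ k, n k) → K)
    (i : ι) :
    matricization i (piKronecker A *ᵥ x) =
      A i * matricization i x * (piKronecker fun k : {k // k ≠ i} => A k)ᵀ := by
  ext a p
  simp only [matricization_apply, Matrix.mulVec, dotProduct, Matrix.mul_apply,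
    Matrix.transpose_apply]
  rw [← (Equiv.piSplitAt i n).symm.sum_comp, Fintype.sum_prod_type_right]
  simp only [piKronecker_piSplitAt_symm, Finset.sum_mul, mul_right_comm]

theorem piKronecker_mulSingle_mulVec_of_mul_matricization [∀ i, DecidableEq (n i)]
    {i : ι} {P : Matrix (n i) (n i) K} {x : (∀ k, n k) → K}
    (hP : P * matricization i x = matricization i x) :
    piKronecker (Pi.mulSingle i P) *ᵥ x = x := by
  have other_modes : (fun k : {k // k ≠ i} =>
      (Pi.mulSingle i P : ∀ k, Matrix (n k) (n k) K) k) = 1 := by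
    funext k
    exact Pi.mulSingle_eq_of_ne (M := fun k => Matrix (n k) (n k) K) k.2 P
  apply matricization_injective i
  rw [matricization_piKronecker_mulVec, Pi.mulSingle_eq_same, hP, other_modes, piKronecker_one,
    Matrix.transpose_one, Matrix.mul_one]

theorem piKronecker_mulVec_of_mul_matricization {P : ∀ i, Matrix (n i) (n i) K}
    {x : (∀ k, n k) → K} (hP : ∀ i, P i * matricization i x = matricization i x) :
    piKronecker P *ᵥ x = x := by
  classical
  let fixing : Submonoid (∀ i, Matrix (n i) (n i) K) :=
    { carrier := {A | piKronecker A *ᵥ x = x}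
      one_mem' := by rw [Set.mem_ofPred_eq, piKronecker_one, Matrix.one_mulVec]
      mul_mem' := fun {A B} (hA : _ = x) (hB : _ = x) => by
        change piKronecker (fun i => A i * B i) *ᵥ x = x
        rw [piKronecker_mul, ← Matrix.mulVec_mulVec, hB, hA] }
  exact Submonoid.pi_mem_of_mulSingle_mem (H := fixing) P
    fun i => piKronecker_mulSingle_mulVec_of_mul_matricization (hP i)

end Matricization

theorem exists_mul_mul_eq_self_of_rank {m n K : Type*} [Fintype m] [Fintype n] [Field K]
    (M : Matrix m n K) :
    ∃ (U : Matrix m (Fin M.rank) K) (W : Matrix (Fin M.rank) m K), U * W * M = M := by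
  classical
  let V := LinearMap.range M.mulVecLin
  obtain ⟨p, hp⟩ := V.subtype.exists_leftInverse_of_injective V.ker_subtype
  have projection_apply (v : n → K) : (p (M *ᵥ v) : m → K) = M *ᵥ v :=
    congr_arg Subtype.val (LinearMap.congr_fun hp ⟨M *ᵥ v, v, rfl⟩)
  let e : V ≃ₗ[K] (Fin M.rank → K) := (Module.finBasisOfFinrankEq K V rfl).equivFun
  refine ⟨LinearMap.toMatrix' (V.subtype ∘ₗ e.symm.toLinearMap),
    LinearMap.toMatrix' (e.toLinearMap ∘ₗ p), ?_⟩
  apply Matrix.mulVec_injective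
  funext v
  simp only [← Matrix.mulVec_mulVec, LinearMap.toMatrix'_mulVec, LinearMap.comp_apply,
    LinearEquiv.coe_coe, LinearEquiv.symm_apply_apply, Submodule.subtype_apply, projection_apply]

section TuckerRank

variable {ι K : Type*} [Fintype ι] [DecidableEq ι] {n : ι → Type*}

/-- `x` has a Tucker representation with representation rank `r`, core `c` and basis matrices `Uᵢ`,
over an arbitrary commutative semiring and with arbitrary index types. -/
def HasTuckerRepr [CommSemiring K] (x : (∀ i, n i) → K) (r : ι → ℕ) : Prop :=
  ∃ (c : (∀ i, Fin (r i)) → K) (U : ∀ i, Matrix (n i) (Fin (r i)) K), x = piKronecker U *ᵥ c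

variable [∀ i, Fintype (n i)]

theorem HasTuckerRepr.rank_matricization_le [CommSemiring K] [StrongRankCondition K]
    {x : (∀ i, n i) → K} {r : ι → ℕ} (h : HasTuckerRepr x r) (i : ι) :
    (matricization i x).rank ≤ r i := by
  obtain ⟨c, U, rfl⟩ := h
  rw [matricization_piKronecker_mulVec, Matrix.mul_assoc]
  calc (U i * _).rank ≤ (U i).rank := Matrix.rank_mul_le_left _ _
    _ ≤ r i := by simpa only [Fintype.card_fin] using (U i).rank_le_card_width

theorem hasTuckerRepr_rank_matricization [Field K] (x : (∀ i, n i) → K) :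
    HasTuckerRepr x fun i => (matricization i x).rank := by
  classical
  choose U W hUW using fun i => exists_mul_mul_eq_self_of_rank (matricization i x)
  refine ⟨piKronecker W *ᵥ x, U, ?_⟩
  rw [Matrix.mulVec_mulVec, ← piKronecker_mul, piKronecker_mulVec_of_mul_matricization hUW]

theorem tucker_rank_eq_mode_matricization_ranks_general [Field K] (x : (∀ i, n i) → K) :
    IsLeast {r | HasTuckerRepr x r} fun i => (matricization i x).rank :=
  ⟨hasTuckerRepr_rank_matricization x, fun _ h i => h.rank_matricization_le i⟩

end TuckerRank

theorem modeMat_eq_matricization (d : ℕ) (n : Fin d → ℕ) (x : (∀ k : Fin d, Fin (n k)) → ℝ)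
    (i : Fin d) : modeMat d n x i = matricization i x := by
  ext a p
  rw [modeMat, matricization_apply]
  congr 1
  funext k
  rw [Equiv.piSplitAt_symm_apply]
  split_ifs with h
  · subst h
    rfl
  · rfl

theorem isTuckerRepr_iff_hasTuckerRepr (d : ℕ) (n : Fin d → ℕ)
    (x : (∀ k : Fin d, Fin (n k)) → ℝ) (ρ : Fin d → ℕ) :
    IsTuckerRepr d n x ρ ↔ HasTuckerRepr x ρ := by
  simp only [IsTuckerRepr, HasTuckerRepr, funext_iff, Matrix.mulVec, dotProduct,
    piKronecker_apply, mul_comm]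
  rfl

/-- **The Tucker rank equals the tuple of single-mode matricization ranks**
[De Lathauwer–De Moor–Vandewalle].

For every tensor `x ∈ ℝ^{n_0 × … × n_{d-1}}`: every Tucker representation of `x` with
representation rank `ρ` satisfies `ρ i ≥ rank (M_{{i}}(x))` for every mode `i`, and there
is a Tucker representation achieving equality in every component.  Hence the
entrywise-minimal representation rank tuple (the Tucker rank) exists and equals
`(rank M_{{1}}(x), …, rank M_{{d}}(x))`. -/
theorem tucker_rank_eq_mode_matricization_ranks
    (d : ℕ) (n : Fin d → ℕ) (x : (∀ k : Fin d, Fin (n k)) → ℝ) :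
    (∀ ρ : Fin d → ℕ, IsTuckerRepr d n x ρ → ∀ i : Fin d, (modeMat d n x i).rank ≤ ρ i) ∧
      ∃ ρ : Fin d → ℕ, IsTuckerRepr d n x ρ ∧
        ∀ i : Fin d, ρ i = (modeMat d n x i).rank := by
  simp only [isTuckerRepr_iff_hasTuckerRepr, modeMat_eq_matricization]
  obtain ⟨attained, minimal⟩ := tucker_rank_eq_mode_matricization_ranks_general x
  exact ⟨fun _ h => minimal h, _, attained, fun _ => rfl⟩
end

section
/- Let x ∈ ℝ^{n_1×…×n_d} and let r* = (r_1*,…,r_d*) be a Tucker rank tuple. Let x* be the tensor obtained from x by the truncated higher order singular value decomposition (HOSVD), i.e. by projecting x onto the spans of the leading r_i* left singular vectors of the mode-i matricizations M_{{i}}(x) for i = 1,…,d. Then ‖x − x*‖_F ≤ √d · min_{y : T-rank(y) ⪯ r*} ‖x − y‖_F, where the minimum is over all tensors y whose Tucker rank is entrywise at most r*. -/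
open Matrix

/-- The Frobenius norm of a real matrix. -/
noncomputable def frob {α β : Type*} [Fintype α] [Fintype β] (A : Matrix α β ℝ) : ℝ :=
  Real.sqrt (∑ i, ∑ j, A i j ^ 2)

/-!
Switching on the projections `Pᵢ = Uᵢ Uᵢᵀ` one mode at a time gives
`x - P z = (x - P x) + P (x - z)`, where `P` acts in the new mode and `z` is `x` with the earlier
projections applied. The summands are orthogonal and `P` is a contraction, so
`‖x - x*‖² ≤ ∑ᵢ ‖M_{i}(x) - Pᵢ M_{i}(x)‖²`. For every competitor `y`, the column space of
`M_{i}(y)` lies in the span of `rᵢ` orthonormal columns `V`; the optimality of `Uᵢ` against `V`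
bounds each of the `d` summands by `‖x - y‖²`.
-/

section MultilinearMul

variable {ι R : Type*} {α β : ι → Type*} [Fintype ι] [DecidableEq ι]
  [∀ i, Fintype (β i)] [CommSemiring R]

/-- The multilinear multiplication `(A₁, …, A_d) · x`: the tensor `x` multiplied by the matrix `A i`
in every mode `i`. -/
def multilinearMul (A : ∀ i, Matrix (α i) (β i) R) (x : (∀ i, β i) → R) : (∀ i, α i) → R :=
  fun μ => ∑ ν, (∏ i, A i (μ i) (ν i)) * x ν

lemma multilinearMul_one [∀ i, DecidableEq (β i)] (x : (∀ i, β i) → R) :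
    multilinearMul (1 : ∀ i, Matrix (β i) (β i) R) x = x := by
  ext μ
  simp [multilinearMul, Matrix.one_apply, Finset.prod_ite_zero, ← funext_iff]

end MultilinearMul

section ModeMat

variable {d : ℕ} {m n : Fin d → ℕ}

lemma frob_modeMat (x : (∀ k, Fin (n k)) → ℝ) (i : Fin d) :
    frob (modeMat d n x i) = √(∑ μ, x μ ^ 2) := by
  rw [frob, ← Fintype.sum_prod_type']
  congr 1
  refine (Fintype.sum_equiv (Equiv.piSplitAt i fun k => Fin (n k)) _ _ fun μ => ?_).symm
  simp only [modeMat, Equiv.piSplitAt_apply]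
  congr 2
  ext k
  split_ifs with h
  · subst h; rfl
  · rfl

lemma frob_modeMat_sub (x y : (∀ k, Fin (n k)) → ℝ) (i : Fin d) :
    frob (modeMat d n x i - modeMat d n y i) = √(∑ μ, (x μ - y μ) ^ 2) :=
  frob_modeMat (x - y) i

lemma modeMat_multilinearMul_update (A : ∀ k, Matrix (Fin (m k)) (Fin (n k)) ℝ) (i : Fin d)
    (P : Matrix (Fin (m i)) (Fin (m i)) ℝ) (x : (∀ k, Fin (n k)) → ℝ) :
    modeMat d m (multilinearMul (Function.update A i (P * A i)) x) i =
      P * modeMat d m (multilinearMul A x) i := by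
  ext a b
  simp only [modeMat, multilinearMul, Matrix.mul_apply, Finset.mul_sum]
  rw [Finset.sum_comm]
  refine Finset.sum_congr rfl fun ν _ => ?_
  have split_mode (B : ∀ k, Matrix (Fin (m k)) (Fin (n k)) ℝ) (c : Fin (m i)) :
      ∏ k, B k (if h : k = i then Fin.cast (congrArg m h).symm c else b ⟨k, h⟩) (ν k) =
        B i c (ν i) * ∏ k : {k // k ≠ i}, B k (b k) (ν k) := by
    rw [Fintype.prod_eq_mul_prod_subtype_ne _ i]
    congr 1
    · simp only [↓reduceDIte, Fin.cast_eq_self]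
    · exact Finset.prod_congr rfl fun k _ => by rw [dif_neg k.2]
  have update_off : ∏ k : {k // k ≠ i}, Function.update A i (P * A i) k (b k) (ν k) =
      ∏ k : {k // k ≠ i}, A k (b k) (ν k) :=
    Finset.prod_congr rfl fun k _ => by rw [Function.update_of_ne k.2]
  simp only [split_mode, update_off, Function.update_self, Matrix.mul_apply, Finset.sum_mul,
    mul_assoc]

end ModeMat

section Frobenius

variable {m β : Type*} [Fintype m] [Fintype β]

lemma frob_nonneg (A : Matrix m β ℝ) : 0 ≤ frob A := Real.sqrt_nonneg _

lemma frob_sq (A : Matrix m β ℝ) : frob A ^ 2 = trace (Aᵀ * A) := by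
  rw [frob, Real.sq_sqrt (by positivity), Finset.sum_comm]
  simp only [trace, diag_apply, Matrix.mul_apply, transpose_apply, pow_two]

lemma frob_mul_sq_of_isStarProjection {P : Matrix m m ℝ} (hP : IsStarProjection P)
    (A : Matrix m β ℝ) : frob (P * A) ^ 2 = trace (Aᵀ * (P * A)) := by
  have hPt : Pᵀ = P := (conjTranspose_eq_transpose_of_trivial P).symm.trans hP.isSelfAdjoint
  rw [frob_sq, transpose_mul, hPt, Matrix.mul_assoc, ← Matrix.mul_assoc P,
    hP.isIdempotentElem.eq]

lemma frob_sq_eq_add_of_isStarProjection {P : Matrix m m ℝ} (hP : IsStarProjection P)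
    (A : Matrix m β ℝ) : frob A ^ 2 = frob (P * A) ^ 2 + frob (A - P * A) ^ 2 := by
  classical
  have residual : A - P * A = (1 - P) * A := by rw [Matrix.sub_mul, Matrix.one_mul]
  rw [residual, frob_mul_sq_of_isStarProjection hP, frob_mul_sq_of_isStarProjection hP.one_sub,
    frob_sq, ← trace_add, ← Matrix.mul_add, ← Matrix.add_mul, add_sub_cancel, Matrix.one_mul]

lemma frob_mul_le_of_isStarProjection {P : Matrix m m ℝ} (hP : IsStarProjection P)
    (A : Matrix m β ℝ) : frob (P * A) ≤ frob A := by
  rw [← pow_le_pow_iff_left₀ (frob_nonneg _) (frob_nonneg _) two_ne_zero,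
    frob_sq_eq_add_of_isStarProjection hP A]
  exact le_add_of_nonneg_right (sq_nonneg _)

lemma frob_sub_mul_le_of_mul_eq {P : Matrix m m ℝ} (hP : IsStarProjection P)
    (A : Matrix m β ℝ) {B : Matrix m β ℝ} (hB : P * B = B) :
    frob (A - P * A) ≤ frob (A - B) := by
  have residual : A - P * A = (A - B) - P * (A - B) := by rw [Matrix.mul_sub, hB]; abel
  rw [residual, ← pow_le_pow_iff_left₀ (frob_nonneg _) (frob_nonneg _) two_ne_zero,
    frob_sq_eq_add_of_isStarProjection hP (A - B)]
  exact le_add_of_nonneg_left (sq_nonneg _)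

lemma frob_sub_mul_sq_le {P : Matrix m m ℝ} (hP : IsStarProjection P) (A B : Matrix m β ℝ) :
    frob (A - P * B) ^ 2 ≤ frob (A - P * A) ^ 2 + frob (A - B) ^ 2 := by
  have range_part : P * (A - P * B) = P * (A - B) := by
    rw [Matrix.mul_sub, ← Matrix.mul_assoc, hP.isIdempotentElem.eq, ← Matrix.mul_sub]
  have kernel_part : A - P * B - P * (A - P * B) = A - P * A := by
    rw [range_part, Matrix.mul_sub]; abel
  calc frob (A - P * B) ^ 2
      = frob (P * (A - B)) ^ 2 + frob (A - P * A) ^ 2 := by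
        rw [frob_sq_eq_add_of_isStarProjection hP (A - P * B), kernel_part, range_part]
    _ ≤ frob (A - B) ^ 2 + frob (A - P * A) ^ 2 := by
        gcongr
        exacts [frob_nonneg _, frob_mul_le_of_isStarProjection hP _]
    _ = frob (A - P * A) ^ 2 + frob (A - B) ^ 2 := add_comm _ _

end Frobenius

lemma exists_submodule_ge_finrank_eq {K V : Type*} [DivisionRing K] [AddCommGroup V] [Module K V]
    [Module.Finite K V] (W : Submodule K V) {r : ℕ} (hW : Module.finrank K W ≤ r)
    (hr : r ≤ Module.finrank K V) : ∃ W' ≥ W, Module.finrank K W' = r := by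
  induction r, hW using Nat.le_induction with
  | base => exact ⟨W, le_rfl, rfl⟩
  | succ r _ ih =>
    obtain ⟨W', hle, hfin⟩ := ih (Nat.le_of_succ_le hr)
    obtain ⟨v, hv⟩ : ∃ v, v ∉ W' := SetLike.exists_not_mem_of_ne_top W' fun htop => by
      rw [htop, finrank_top] at hfin
      exact (Nat.lt_of_succ_le hr).ne' hfin
    exact ⟨W' ⊔ Submodule.span K {v}, hle.trans le_sup_left, by
      rw [Submodule.finrank_sup_span_singleton hv, hfin]⟩

section OrthonormalColumns

variable {m κ β : Type*} [Fintype m] [Fintype κ] [DecidableEq κ]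

lemma isStarProjection_mul_conjTranspose {R : Type*} [Semiring R] [StarRing R]
    {V : Matrix m κ R} (hV : Vᴴ * V = 1) : IsStarProjection (V * Vᴴ) where
  isIdempotentElem := by
    rw [IsIdempotentElem, Matrix.mul_assoc, ← Matrix.mul_assoc Vᴴ, hV, Matrix.one_mul]
  isSelfAdjoint := isHermitian_mul_conjTranspose_self V

lemma card_le_card_of_mul_eq_one {R : Type*} [CommSemiring R] [StrongRankCondition R]
    {A : Matrix κ m R} {B : Matrix m κ R} (h : A * B = 1) :
    Fintype.card κ ≤ Fintype.card m := by
  calc Fintype.card κ = (A * B).rank := by rw [h, rank_one]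
    _ ≤ A.rank := rank_mul_le_left A B
    _ ≤ Fintype.card m := rank_le_card_width A

variable {𝕜 : Type*} [RCLike 𝕜]

lemma exists_orthonormal_columns_of_finrank_eq (W : Submodule 𝕜 (EuclideanSpace 𝕜 m))
    (hW : Module.finrank 𝕜 W = Fintype.card κ) :
    ∃ V : Matrix m κ 𝕜, Vᴴ * V = 1 ∧ ∀ w ∈ W, (V * Vᴴ) *ᵥ w = w := by
  let b : OrthonormalBasis κ 𝕜 W :=
    (stdOrthonormalBasis 𝕜 W).reindex (Fintype.equivOfCardEq (by simp [hW]))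
  let V : Matrix m κ 𝕜 := of fun a k => (b k : EuclideanSpace 𝕜 m) a
  refine ⟨V, ?_, fun w hw => ?_⟩
  · ext k l
    rw [one_apply, ← orthonormal_iff_ite.mp b.orthonormal k l, Submodule.coe_inner]
    simp [V, Matrix.mul_apply, PiLp.inner_apply, mul_comm]
  · have expansion : ∑ k, inner 𝕜 (b k) ⟨w, hw⟩ • (b k : EuclideanSpace 𝕜 m) = w := by
      simpa using congrArg Subtype.val (b.sum_repr' ⟨w, hw⟩)
    have coefficients : Vᴴ *ᵥ w = fun k => inner 𝕜 (b k) ⟨w, hw⟩ := by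
      ext k
      simp [V, mulVec, dotProduct, PiLp.inner_apply, mul_comm]
    rw [← mulVec_mulVec, coefficients]
    conv_rhs => rw [← expansion]
    ext a
    simp [V, mulVec, dotProduct, mul_comm]

lemma exists_orthonormal_columns_of_rank_le [Fintype β] (M : Matrix m β 𝕜)
    (hM : M.rank ≤ Fintype.card κ) (hκ : Fintype.card κ ≤ Fintype.card m) :
    ∃ V : Matrix m κ 𝕜, Vᴴ * V = 1 ∧ V * Vᴴ * M = M := by
  let e : (m → 𝕜) ≃ₗ[𝕜] EuclideanSpace 𝕜 m := (WithLp.linearEquiv 2 𝕜 (m → 𝕜)).symm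
  let W := (Submodule.span 𝕜 (Set.range M.col)).map e.toLinearMap
  have hW : Module.finrank 𝕜 W ≤ Fintype.card κ := by
    rwa [LinearEquiv.finrank_map_eq, ← rank_eq_finrank_span_cols]
  obtain ⟨W', hle, hW'⟩ :=
    exists_submodule_ge_finrank_eq W hW (by rwa [finrank_euclideanSpace])
  obtain ⟨V, hV, hfix⟩ := exists_orthonormal_columns_of_finrank_eq W' hW'
  refine ⟨V, hV, ext_col fun j => ?_⟩
  exact hfix _ (hle (Submodule.mem_map_of_mem (Submodule.subset_span ⟨j, rfl⟩)))

lemma frob_sub_le_of_leading [Fintype β] {M N : Matrix m β ℝ} {U : Matrix m κ ℝ}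
    (hU : Uᵀ * U = 1)
    (hLead : ∀ V : Matrix m κ ℝ, Vᵀ * V = 1 → frob (M - U * Uᵀ * M) ≤ frob (M - V * Vᵀ * M))
    (hN : N.rank ≤ Fintype.card κ) : frob (M - U * Uᵀ * M) ≤ frob (M - N) := by
  obtain ⟨V, hV, hVN⟩ :=
    exists_orthonormal_columns_of_rank_le N hN (card_le_card_of_mul_eq_one hU)
  have hP := isStarProjection_mul_conjTranspose hV
  rw [conjTranspose_eq_transpose_of_trivial] at hV hVN hP
  exact (hLead V hV).trans (frob_sub_mul_le_of_mul_eq hP M hVN)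

end OrthonormalColumns

section HOSVD

variable {d : ℕ} {n : Fin d → ℕ}

lemma sum_sub_multilinearMul_piecewise_sq_le {P : ∀ i, Matrix (Fin (n i)) (Fin (n i)) ℝ}
    (hP : ∀ i, IsStarProjection (P i)) (x : (∀ k, Fin (n k)) → ℝ) (S : Finset (Fin d)) :
    ∑ μ, (x μ - multilinearMul (S.piecewise P 1) x μ) ^ 2 ≤
      ∑ i ∈ S, frob (modeMat d n x i - P i * modeMat d n x i) ^ 2 := by
  have sum_sq (y : (∀ k, Fin (n k)) → ℝ) (i : Fin d) :
      ∑ μ, (x μ - y μ) ^ 2 = frob (modeMat d n x i - modeMat d n y i) ^ 2 := by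
    rw [frob_modeMat_sub, Real.sq_sqrt (by positivity)]
  induction S using Finset.induction_on with
  | empty => simp [multilinearMul_one]
  | insert i S hiS ih =>
    have apply_mode : (insert i S).piecewise P 1 =
        Function.update (S.piecewise P 1) i (P i * S.piecewise P 1 i) := by
      rw [Finset.piecewise_insert, Finset.piecewise_eq_of_notMem _ _ _ hiS, Pi.one_apply, mul_one]
    rw [Finset.sum_insert hiS, sum_sq _ i, apply_mode, modeMat_multilinearMul_update]
    refine (frob_sub_mul_sq_le (hP i) _ _).trans ?_
    rw [← sum_sq]
    gcongr

lemma sum_sub_multilinearMul_sq_le {P : ∀ i, Matrix (Fin (n i)) (Fin (n i)) ℝ}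
    (hP : ∀ i, IsStarProjection (P i)) (x : (∀ k, Fin (n k)) → ℝ) :
    ∑ μ, (x μ - multilinearMul P x μ) ^ 2 ≤
      ∑ i, frob (modeMat d n x i - P i * modeMat d n x i) ^ 2 := by
  simpa using sum_sub_multilinearMul_piecewise_sq_le hP x Finset.univ

lemma sqrt_sum_sub_multilinearMul_sq_le {rs : Fin d → ℕ}
    {U : ∀ i, Matrix (Fin (n i)) (Fin (rs i)) ℝ} {x y : (∀ k, Fin (n k)) → ℝ}
    (hU : ∀ i, (U i)ᵀ * U i = 1)
    (hLead : ∀ i, ∀ V : Matrix (Fin (n i)) (Fin (rs i)) ℝ, Vᵀ * V = 1 →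
      frob (modeMat d n x i - U i * (U i)ᵀ * modeMat d n x i) ≤
        frob (modeMat d n x i - V * Vᵀ * modeMat d n x i))
    (hy : ∀ i, (modeMat d n y i).rank ≤ rs i) :
    √(∑ μ, (x μ - multilinearMul (fun i => U i * (U i)ᵀ) x μ) ^ 2) ≤
      √d * √(∑ μ, (x μ - y μ) ^ 2) := by
  have hP (i : Fin d) : IsStarProjection (U i * (U i)ᵀ) := by
    simpa using isStarProjection_mul_conjTranspose (V := U i) (by simpa using hU i)
  have mode_error (i : Fin d) :
      frob (modeMat d n x i - U i * (U i)ᵀ * modeMat d n x i) ≤ √(∑ μ, (x μ - y μ) ^ 2) := by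
    rw [← frob_modeMat_sub x y i]
    exact frob_sub_le_of_leading (hU i) (hLead i) (by simpa using hy i)
  rw [← Real.sqrt_mul d.cast_nonneg]
  refine Real.sqrt_le_sqrt ((sum_sub_multilinearMul_sq_le hP x).trans ?_)
  calc ∑ i, frob (modeMat d n x i - U i * (U i)ᵀ * modeMat d n x i) ^ 2
      ≤ ∑ _i : Fin d, √(∑ μ, (x μ - y μ) ^ 2) ^ 2 := by
        gcongr with i; exacts [frob_nonneg _, mode_error i]
    _ = d * ∑ μ, (x μ - y μ) ^ 2 := by
        rw [Real.sq_sqrt (by positivity), Finset.sum_const, Finset.card_fin, nsmul_eq_mul]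

end HOSVD

/-- **Quasi-optimality of the truncated higher order SVD (HOSVD)**.

Let `x ∈ ℝ^{n_0 × … × n_{d-1}}` and let `rs` be a Tucker rank tuple.  For each mode `i`
let `U i ∈ ℝ^{n_i × rs i}` be the orthonormal matrix of leading left singular vectors of
the mode-`i` matricization `M_{{i}}(x)` — characterized by the property that among all
matrices `V` with `rs i` orthonormal columns, the projection `U i (U i)ᵀ M_{{i}}(x)`
is closest to `M_{{i}}(x)` in the Frobenius norm.  Let `x*` be obtained from `x` by
multiplying each mode `i` with the orthogonal projector `U i (U i)ᵀ`.  Then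
`‖x − x*‖_F ≤ √d · min_{y : T-rank(y) ⪯ rs} ‖x − y‖_F`, where the Tucker rank of `y` is
the tuple of the ranks of its single-mode matricizations. -/
theorem truncated_hosvd_quasi_optimal
    (d : ℕ) (n : Fin d → ℕ) (x : (∀ k : Fin d, Fin (n k)) → ℝ)
    (rs : Fin d → ℕ)
    (U : ∀ i : Fin d, Matrix (Fin (n i)) (Fin (rs i)) ℝ)
    -- `U i` has orthonormal columns …
    (hU : ∀ i, (U i)ᵀ * U i = 1)
    -- … spanning a leading left singular subspace of `M_{{i}}(x)`
    (hLead : ∀ i, ∀ V : Matrix (Fin (n i)) (Fin (rs i)) ℝ, Vᵀ * V = 1 →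
      frob (modeMat d n x i - U i * (U i)ᵀ * modeMat d n x i) ≤
        frob (modeMat d n x i - V * Vᵀ * modeMat d n x i))
    -- `x*` is `x` multiplied in each mode `i` by the orthogonal projector `U i (U i)ᵀ`
    (xstar : (∀ k : Fin d, Fin (n k)) → ℝ)
    (hxstar : ∀ μ, xstar μ =
      ∑ ν : ∀ k : Fin d, Fin (n k), x ν * ∏ i : Fin d, (U i * (U i)ᵀ) (μ i) (ν i)) :
    Real.sqrt (∑ μ, (x μ - xstar μ) ^ 2) ≤
      Real.sqrt (d : ℝ) *
        sInf {e : ℝ | ∃ y : (∀ k : Fin d, Fin (n k)) → ℝ,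
          (∀ i : Fin d, (modeMat d n y i).rank ≤ rs i) ∧
            e = Real.sqrt (∑ μ, (x μ - y μ) ^ 2)} := by
  obtain rfl : xstar = multilinearMul (fun i => U i * (U i)ᵀ) x := by
    ext μ
    simp only [hxstar, multilinearMul, mul_comm]
  rw [← smul_eq_mul, ← Real.sInf_smul_of_nonneg (Real.sqrt_nonneg _)]
  refine le_csInf (Set.Nonempty.smul_set ⟨_, 0, fun i => ?_, rfl⟩) ?_
  · exact (rank_zero (R := ℝ)).trans_le (Nat.zero_le _)
  · rintro _ ⟨_, ⟨y, hy, rfl⟩, rfl⟩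
    exact sqrt_sum_sub_multilinearMul_sq_le hU hLead hy
end

section
/- Let W_2,…,W_d be component tensors (W_i ∈ ℝ^{s_{i-1}×n_i×s_i} for 2 ≤ i ≤ d−1, W_d ∈ ℝ^{s_{d-1}×n_d}) such that for each i the flattening of W_i separating its first mode from the remaining modes has orthonormal rows. Then the linear map P_{2..d} : ℝ^{n_1×…×n_d} → ℝ^{n_1×…×n_d} defined by P_{2..d}(x) := x ∘_{(2,…,d),(2,…,d)} ((W_2 ∘ … ∘ W_d) ∘_{1,1} (W_2 ∘ … ∘ W_d)) is an orthogonal projection with respect to the Euclidean inner product: P_{2..d} ∘ P_{2..d} = P_{2..d} and ⟨P_{2..d}(x), y⟩ = ⟨x, P_{2..d}(y)⟩ for all x, y. In particular ‖x − P_{2..d}(x)‖² = ‖x‖² − ‖P_{2..d}(x)‖². -/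
open MeasureTheory ProbabilityTheory

/-- The index type for the first `j` modes of an order `d` tensor. -/
def PIdx (d : ℕ) (n : Fin d → ℕ) (j : ℕ) : Type := (k : Fin d) → k.val < j → Fin (n k)

/-- The index type for the modes `j, …, d-1` of an order `d` tensor. -/
def SIdx (d : ℕ) (n : Fin d → ℕ) (j : ℕ) : Type := (k : Fin d) → j ≤ k.val → Fin (n k)

instance (d : ℕ) (n : Fin d → ℕ) (j : ℕ) : Fintype (PIdx d n j) := by
  unfold PIdx; infer_instance

instance (d : ℕ) (n : Fin d → ℕ) (j : ℕ) : Fintype (SIdx d n j) := by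
  unfold SIdx; infer_instance

/-- Append one further index to a prefix-index. -/
def PIdx.snoc {d : ℕ} {n : Fin d → ℕ} {j : ℕ} (i : PIdx d n j) (k0 : Fin d)
    (h : k0.val = j) (μ : Fin (n k0)) : PIdx d n (j + 1) := fun k hk =>
  if hlt : k.val < j then i k hlt
  else
    have hkk : k = k0 := Fin.ext (by omega)
    Fin.cast (congrArg n hkk).symm μ

/-- The chain (tensor train) contraction of the components `W c, …, W (d-1)`:
a tensor with one bond mode of dimension `q c` and the physical modes `c, …, d-1`;
`m` is the number of physical modes, i.e. `c + m = d`. -/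
def chainT (d : ℕ) (n : Fin d → ℕ) (q : ℕ → ℕ)
    (W : (k : ℕ) → (hk : k < d) → Fin (q k) → Fin (n ⟨k, hk⟩) → Fin (q (k + 1)) → ℝ) :
    (m c : ℕ) → c + m = d → Fin (q c) → SIdx d n c → ℝ
  | 0, _, _ => fun _ _ => 1
  | m + 1, c, h => fun α j =>
      have hc : c < d := by omega
      ∑ β : Fin (q (c + 1)),
        W c hc α (j ⟨c, hc⟩ (le_refl c)) β *
          chainT d n q W m (c + 1) (by omega) β (fun k hk => j k (by omega))

/-- Merge a full prefix (taken from `i`) with a suffix index `j`. -/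
def mergeIdx {d : ℕ} {n : Fin d → ℕ} (c : ℕ) (i : ∀ k : Fin d, Fin (n k))
    (j : SIdx d n c) : ∀ k : Fin d, Fin (n k) := fun k =>
  if h : c ≤ k.val then j k h else i k

/-- The orthogonal projection `z ↦ z ∘_{(c+1,…,d),(c+1,…,d)}
`((W_c∘…∘W_{d-1}) ∘_{1,1} (W_c∘…∘W_{d-1}))` (0-based modes `c, …, d-1`). -/
noncomputable def Pmap (d : ℕ) (n : Fin d → ℕ) (q : ℕ → ℕ)
    (W : (k : ℕ) → (hk : k < d) → Fin (q k) → Fin (n ⟨k, hk⟩) → Fin (q (k + 1)) → ℝ)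
    (m c : ℕ) (h : c + m = d) (z : (∀ k : Fin d, Fin (n k)) → ℝ) :
    (∀ k : Fin d, Fin (n k)) → ℝ := fun i =>
  ∑ α : Fin (q c), ∑ j : SIdx d n c,
    z (mergeIdx c i j) * chainT d n q W m c h α j *
      chainT d n q W m c h α (fun k _ => i k)

/-- A tensor train representation of `x` with rank tuple `ρ`. -/
def IsTTRepr (d : ℕ) (n : Fin d → ℕ) (x : (∀ k : Fin d, Fin (n k)) → ℝ)
    (ρ : Fin (d + 1) → ℕ) : Prop :=
  ρ 0 = 1 ∧ ρ (Fin.last d) = 1 ∧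
    ∃ Gc : (k : Fin d) → Fin (n k) → Fin (ρ k.castSucc) → Fin (ρ k.succ) → ℝ,
      ∀ i, x i = ∑ jj : (∀ m : Fin (d + 1), Fin (ρ m)),
        ∏ k : Fin d, Gc k (i k) (jj k.castSucc) (jj k.succ)

/-- `x` has TT-rank at most `(r, …, r)`. -/
def TTRankLe (d : ℕ) (n : Fin d → ℕ) (x : (∀ k : Fin d, Fin (n k)) → ℝ) (r : ℕ) : Prop :=
  ∃ ρ, IsTTRepr d n x ρ ∧ ∀ m : Fin (d + 1), 0 < m.val → m.val < d → ρ m ≤ r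


/-!
Flattening a tensor to a prefix index (modes before `c`) and a suffix index (modes from `c` on)
turns `P` into `1 ⊗ AᴴA`, where `A` is the matrix of the chain `W_c ∘ ⋯ ∘ W_{d-1}` with rows
indexed by its bond mode. If `A * Aᴴ = 1`, then `AᴴA` is symmetric and idempotent, and hence so is
`1 ⊗ AᴴA`. Peeling off the first component gives `A_c = U_c (1 ⊗ A_{c+1})` with `U_c` the
flattening of `W_c`, so that `A_c A_cᴴ = U_c (1 ⊗ A_{c+1} A_{c+1}ᴴ) U_cᴴ`, and orthonormality of
the rows propagates from the last component to the first.
-/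

open Matrix Kronecker

section StarProjection

variable {R l m n : Type*} [Fintype m] [Fintype n]

lemma isStarProjection_conjTranspose_mul_self [Semiring R] [StarRing R] [DecidableEq m]
    {A : Matrix m n R} (hA : A * Aᴴ = 1) : IsStarProjection (Aᴴ * A) where
  isIdempotentElem := by
    rw [IsIdempotentElem, Matrix.mul_assoc, ← Matrix.mul_assoc A, hA, Matrix.one_mul]
  isSelfAdjoint := isHermitian_conjTranspose_mul_self A

lemma isStarProjection_kronecker [CommSemiring R] [StarRing R] {P : Matrix m m R}
    {Q : Matrix n n R} (hP : IsStarProjection P) (hQ : IsStarProjection Q) :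
    IsStarProjection (P ⊗ₖ Q) where
  isIdempotentElem := by
    rw [IsIdempotentElem, ← mul_kronecker_mul, hP.isIdempotentElem.eq, hQ.isIdempotentElem.eq]
  isSelfAdjoint := by
    rw [IsSelfAdjoint, star_eq_conjTranspose, conjTranspose_kronecker, ← star_eq_conjTranspose,
      ← star_eq_conjTranspose, hP.isSelfAdjoint.star_eq, hQ.isSelfAdjoint.star_eq]

lemma isStarProjection_submatrix_equiv [NonUnitalNonAssocSemiring R] [StarRing R]
    {Q : Matrix n n R} (hQ : IsStarProjection Q) (e : m ≃ n) :
    IsStarProjection (Q.submatrix e e) where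
  isIdempotentElem := by
    rw [IsIdempotentElem, submatrix_mul_equiv, hQ.isIdempotentElem.eq]
  isSelfAdjoint := hQ.isSelfAdjoint.isHermitian.submatrix e

lemma star_mulVec_dotProduct_of_isSelfAdjoint [NonUnitalSemiring R] [StarRing R]
    {Q : Matrix n n R} (hQ : IsSelfAdjoint Q) (x y : n → R) :
    star (Q *ᵥ x) ⬝ᵥ y = star x ⬝ᵥ Q *ᵥ y := by
  rw [star_mulVec, ← star_eq_conjTranspose, hQ.star_eq, dotProduct_mulVec]

lemma star_sub_mulVec_dotProduct_self_of_isStarProjection [NonUnitalRing R] [StarRing R]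
    {Q : Matrix n n R} (hQ : IsStarProjection Q) (x : n → R) :
    star (x - Q *ᵥ x) ⬝ᵥ (x - Q *ᵥ x) = star x ⬝ᵥ x - star (Q *ᵥ x) ⬝ᵥ Q *ᵥ x := by
  have mulVec_self : star (Q *ᵥ x) ⬝ᵥ Q *ᵥ x = star x ⬝ᵥ Q *ᵥ x := by
    rw [star_mulVec_dotProduct_of_isSelfAdjoint hQ.isSelfAdjoint, mulVec_mulVec,
      hQ.isIdempotentElem.eq]
  rw [star_sub, sub_dotProduct, dotProduct_sub, dotProduct_sub, mulVec_self,
    star_mulVec_dotProduct_of_isSelfAdjoint hQ.isSelfAdjoint, sub_self, sub_zero]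

end StarProjection

section OrthonormalRows

variable {R l m n p : Type*} [Fintype n] [Fintype p]

lemma mul_one_kronecker_mul_conjTranspose_eq_one [CommSemiring R] [StarRing R]
    [Fintype l] [DecidableEq l] [DecidableEq m] [DecidableEq p]
    {U : Matrix m (l × p) R} {A : Matrix p n R} (hU : U * Uᴴ = 1) (hA : A * Aᴴ = 1) :
    U * ((1 : Matrix l l R) ⊗ₖ A) * (U * ((1 : Matrix l l R) ⊗ₖ A))ᴴ = 1 := by
  rw [conjTranspose_mul, Matrix.mul_assoc, ← Matrix.mul_assoc (_ ⊗ₖ _), conjTranspose_kronecker,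
    conjTranspose_one, ← mul_kronecker_mul, Matrix.one_mul, hA, one_kronecker_one, Matrix.one_mul,
    hU]

lemma submatrix_id_equiv_mul_conjTranspose [NonUnitalNonAssocSemiring R] [StarRing R]
    (A : Matrix m n R) (e : p ≃ n) : A.submatrix id e * (A.submatrix id e)ᴴ = A * Aᴴ := by
  rw [conjTranspose_submatrix, submatrix_mul_equiv, submatrix_id_id]

end OrthonormalRows

section ModeIndices

variable (d : ℕ) (n : Fin d → ℕ) (c : ℕ)

instance : DecidableEq (PIdx d n c) := by
  unfold PIdx; infer_instance

/-- Splitting off the first mode of a suffix index. -/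
def SIdx.consEquiv (hc : c < d) : SIdx d n c ≃ Fin (n ⟨c, hc⟩) × SIdx d n (c + 1) where
  toFun j := (j ⟨c, hc⟩ le_rfl, fun k hk => j k (by omega))
  invFun p k hk :=
    if h : c + 1 ≤ k.val then p.2 k h
    else Fin.cast (congrArg n (Fin.ext (show c = k.val by omega))) p.1
  left_inv j := by
    funext k hk
    obtain rfl | hlt := hk.eq_or_lt
    · simp
    · simp [Nat.succ_le_of_lt hlt]
  right_inv p := by
    ext1
    · simp
    · funext k hk
      simp [hk]

instance : Unique (SIdx d n d) where
  default k hk := absurd k.isLt hk.not_gt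
  uniq _ := funext fun k => funext fun hk => absurd k.isLt hk.not_gt

/-- The multi-indices of an order `d` tensor, cut into the modes before `c` and those from `c`
on. -/
def prefixSuffixEquiv : (∀ k : Fin d, Fin (n k)) ≃ PIdx d n c × SIdx d n c where
  toFun i := (fun k _ => i k, fun k _ => i k)
  invFun p k := if h : c ≤ k.val then p.2 k h else p.1 k (not_le.mp h)
  left_inv i := by
    funext k
    simp
  right_inv p := by
    ext1 <;> funext k hk
    · simp [hk.not_ge]
    · simp [hk]

lemma prefixSuffixEquiv_symm_fst_mk (i : ∀ k : Fin d, Fin (n k)) (j : SIdx d n c) :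
    (prefixSuffixEquiv d n c).symm ((prefixSuffixEquiv d n c i).1, j) = mergeIdx c i j :=
  rfl

end ModeIndices

section Chain

variable {d : ℕ} {n : Fin d → ℕ} {q : ℕ → ℕ}
  (W : (k : ℕ) → (hk : k < d) → Fin (q k) → Fin (n ⟨k, hk⟩) → Fin (q (k + 1)) → ℝ)

/-- The flattening of the component `W_k` that separates its first mode (the rows) from the
remaining two. -/
def componentMatrix (k : ℕ) (hk : k < d) :
    Matrix (Fin (q k)) (Fin (n ⟨k, hk⟩) × Fin (q (k + 1))) ℝ :=
  of fun α p => W k hk α p.1 p.2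

lemma componentMatrix_mul_conjTranspose_eq_one_iff (k : ℕ) (hk : k < d) :
    componentMatrix W k hk * (componentMatrix W k hk)ᴴ = 1 ↔
      ∀ α α' : Fin (q k), ∑ μ : Fin (n ⟨k, hk⟩), ∑ β : Fin (q (k + 1)),
        W k hk α μ β * W k hk α' μ β = if α = α' then 1 else 0 := by
  simp [← Matrix.ext_iff, componentMatrix, mul_apply, Fintype.sum_prod_type, one_apply]

/-- The chain `W_c ∘ ⋯ ∘ W_{d-1}` as a matrix, with the bond mode as row index and all physical
modes together as column index. -/
def chainMatrix (m c : ℕ) (h : c + m = d) : Matrix (Fin (q c)) (SIdx d n c) ℝ :=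
  of (chainT d n q W m c h)

lemma chainMatrix_succ_apply (m c : ℕ) (h : c + (m + 1) = d) (α : Fin (q c)) (j : SIdx d n c) :
    chainMatrix W (m + 1) c h α j =
      ∑ β : Fin (q (c + 1)), W c (by omega) α (SIdx.consEquiv d n c (by omega) j).1 β *
        chainMatrix W m (c + 1) (by omega) β (SIdx.consEquiv d n c (by omega) j).2 :=
  rfl

lemma chainMatrix_succ (m c : ℕ) (h : c + (m + 1) = d) :
    chainMatrix W (m + 1) c h =
      (componentMatrix W c (by omega) *
        ((1 : Matrix (Fin (n ⟨c, _⟩)) (Fin (n ⟨c, _⟩)) ℝ) ⊗ₖ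
          chainMatrix W m (c + 1) (by omega))).submatrix id (SIdx.consEquiv d n c (by omega)) := by
  ext α j
  simp [chainMatrix_succ_apply, componentMatrix, mul_apply, Fintype.sum_prod_type, one_apply]

lemma chainMatrix_mul_conjTranspose (hqd : q d = 1) (m c : ℕ) (h : c + m = d)
    (hW : ∀ k (_ : c ≤ k) (hk : k < d), componentMatrix W k hk * (componentMatrix W k hk)ᴴ = 1) :
    chainMatrix W m c h * (chainMatrix W m c h)ᴴ = 1 := by
  induction m generalizing c with
  | zero =>
    obtain rfl : c = d := h
    have : Subsingleton (Fin (q c)) := by rw [hqd]; infer_instance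
    ext α α'
    obtain rfl : α = α' := Subsingleton.elim α α'
    simp [chainMatrix, chainT, mul_apply]
  | succ m ih =>
    rw [chainMatrix_succ, submatrix_id_equiv_mul_conjTranspose]
    exact mul_one_kronecker_mul_conjTranspose_eq_one (hW c le_rfl _)
      (ih (c + 1) _ fun k hk => hW k (by omega))

/-- The matrix `1 ⊗ AᴴA` of `Pmap` with respect to the standard basis, where `A` is the matrix of
the chain and the identity acts on the modes before `c`. -/
def projectionMatrix (m c : ℕ) (h : c + m = d) :
    Matrix (∀ k : Fin d, Fin (n k)) (∀ k : Fin d, Fin (n k)) ℝ :=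
  ((1 : Matrix (PIdx d n c) (PIdx d n c) ℝ) ⊗ₖ
    ((chainMatrix W m c h)ᴴ * chainMatrix W m c h)).submatrix
      (prefixSuffixEquiv d n c) (prefixSuffixEquiv d n c)

lemma projectionMatrix_mulVec_apply (m c : ℕ) (h : c + m = d)
    (z : (∀ k : Fin d, Fin (n k)) → ℝ) (i : ∀ k : Fin d, Fin (n k)) :
    (projectionMatrix W m c h *ᵥ z) i = ∑ j : SIdx d n c,
      ((chainMatrix W m c h)ᴴ * chainMatrix W m c h) (prefixSuffixEquiv d n c i).2 j *
        z (mergeIdx c i j) := by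
  rw [projectionMatrix, submatrix_mulVec_equiv, Function.comp_apply, mulVec, dotProduct,
    Fintype.sum_prod_type]
  simp [one_apply, prefixSuffixEquiv_symm_fst_mk]

lemma Pmap_eq_sum_chainMatrix (m c : ℕ) (h : c + m = d)
    (z : (∀ k : Fin d, Fin (n k)) → ℝ) (i : ∀ k : Fin d, Fin (n k)) :
    Pmap d n q W m c h z i = ∑ α : Fin (q c), ∑ j : SIdx d n c,
      z (mergeIdx c i j) * chainMatrix W m c h α j *
        chainMatrix W m c h α (prefixSuffixEquiv d n c i).2 :=
  rfl

lemma projectionMatrix_mulVec (m c : ℕ) (h : c + m = d) (z : (∀ k : Fin d, Fin (n k)) → ℝ) :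
    projectionMatrix W m c h *ᵥ z = Pmap d n q W m c h z := by
  funext i
  simp only [projectionMatrix_mulVec_apply, Pmap_eq_sum_chainMatrix, mul_apply, conjTranspose_apply,
    star_trivial, Finset.sum_mul]
  rw [Finset.sum_comm]
  exact Finset.sum_congr rfl fun α _ => Finset.sum_congr rfl fun j _ => by ring

lemma isStarProjection_projectionMatrix (hqd : q d = 1) (m c : ℕ) (h : c + m = d)
    (hW : ∀ k (_ : c ≤ k) (hk : k < d), componentMatrix W k hk * (componentMatrix W k hk)ᴴ = 1) :
    IsStarProjection (projectionMatrix W m c h) :=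
  isStarProjection_submatrix_equiv (isStarProjection_kronecker (.one _) <|
    isStarProjection_conjTranspose_mul_self <| chainMatrix_mul_conjTranspose W hqd m c h hW) _

end Chain

theorem Pmap_is_orthogonal_projection_general
    (d : ℕ) (n : Fin d → ℕ) (q : ℕ → ℕ) (hqd : q d = 1)
    (W : (k : ℕ) → (hk : k < d) → Fin (q k) → Fin (n ⟨k, hk⟩) → Fin (q (k + 1)) → ℝ)
    (m c : ℕ) (h : c + m = d)
    (hOrtho : ∀ k (_ : c ≤ k) (hk : k < d) (α α' : Fin (q k)),
      (∑ μ : Fin (n ⟨k, hk⟩), ∑ β : Fin (q (k + 1)), W k hk α μ β * W k hk α' μ β)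
        = if α = α' then 1 else 0) :
    (∀ (z : (∀ k : Fin d, Fin (n k)) → ℝ) (i : ∀ k : Fin d, Fin (n k)),
        Pmap d n q W m c h (Pmap d n q W m c h z) i = Pmap d n q W m c h z i) ∧
      (∀ z y : (∀ k : Fin d, Fin (n k)) → ℝ,
        (∑ i, Pmap d n q W m c h z i * y i) = ∑ i, z i * Pmap d n q W m c h y i) ∧
      ∀ z : (∀ k : Fin d, Fin (n k)) → ℝ,
        (∑ i, (z i - Pmap d n q W m c h z i) ^ 2) =
          (∑ i, z i ^ 2) - ∑ i, Pmap d n q W m c h z i ^ 2 := by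
  have hQ : IsStarProjection (projectionMatrix W m c h) :=
    isStarProjection_projectionMatrix W hqd m c h fun k hck hk =>
      (componentMatrix_mul_conjTranspose_eq_one_iff W k hk).mpr (hOrtho k hck hk)
  simp only [← projectionMatrix_mulVec]
  refine ⟨fun z i => ?_, fun z y => ?_, fun z => ?_⟩
  · rw [mulVec_mulVec, hQ.isIdempotentElem.eq]
  · simpa [dotProduct] using star_mulVec_dotProduct_of_isSelfAdjoint hQ.isSelfAdjoint z y
  · simpa [dotProduct, pow_two] using star_sub_mulVec_dotProduct_self_of_isStarProjection hQ z

/-- **The map `P_{2..d}` is an orthogonal projection.**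

Let `W_k ∈ ℝ^{q_k × n_k × q_{k+1}}` (0-based `k = 1, …, d-1`, trailing dummy bond
`q d = 1`, so the last component is `W_{d-1} ∈ ℝ^{q_{d-1} × n_{d-1}}`) be component
tensors such that the flattening of each `W_k` separating its first mode from the
remaining modes has orthonormal rows.  Then the linear map
`P_{2..d} : z ↦ z ∘_{(2,…,d),(2,…,d)} ((W_2∘…∘W_d) ∘_{1,1} (W_2∘…∘W_d))` is an
orthogonal projection with respect to the Euclidean inner product: `P ∘ P = P` and
`⟨P z, y⟩ = ⟨z, P y⟩` for all `z, y`; in particular `‖z - P z‖² = ‖z‖² - ‖P z‖²`. -/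
theorem Pmap_is_orthogonal_projection
    (d : ℕ) (hd : 1 ≤ d) (n : Fin d → ℕ) (q : ℕ → ℕ) (hqd : q d = 1)
    (W : (k : ℕ) → (hk : k < d) → Fin (q k) → Fin (n ⟨k, hk⟩) → Fin (q (k + 1)) → ℝ)
    -- the flattenings of the `W_k` have orthonormal rows
    (hOrtho : ∀ k (h1 : 1 ≤ k) (hk : k < d) (α α' : Fin (q k)),
      (∑ μ : Fin (n ⟨k, hk⟩), ∑ β : Fin (q (k + 1)), W k hk α μ β * W k hk α' μ β)
        = if α = α' then 1 else 0) :
    (∀ (z : (∀ k : Fin d, Fin (n k)) → ℝ) (i : ∀ k : Fin d, Fin (n k)),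
        Pmap d n q W (d - 1) 1 (by omega) (Pmap d n q W (d - 1) 1 (by omega) z) i =
          Pmap d n q W (d - 1) 1 (by omega) z i) ∧
      (∀ z y : (∀ k : Fin d, Fin (n k)) → ℝ,
        (∑ i, Pmap d n q W (d - 1) 1 (by omega) z i * y i) =
          ∑ i, z i * Pmap d n q W (d - 1) 1 (by omega) y i) ∧
      ∀ z : (∀ k : Fin d, Fin (n k)) → ℝ,
        (∑ i, (z i - Pmap d n q W (d - 1) 1 (by omega) z i) ^ 2) =
          (∑ i, z i ^ 2) - ∑ i, Pmap d n q W (d - 1) 1 (by omega) z i ^ 2 := by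
  exact Pmap_is_orthogonal_projection_general d n q hqd W (d - 1) 1 (by omega) hOrtho
end
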